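/- arXiv:1311.1723 — 6 statements merged into one kernel-verified Lean document; each statement's English description precedes it below -/
import Mathlib

section
/- For any realization of Algorithm RFD on an input sequence of length n, the content t of the total counter at the end of the k-th call to Update (for k ≥ 0, where k = 0 denotes the situation immediately after initialization) satisfies: t ≤ d + N + c·d·L if a rescale takes place in step k, and t ≤ T otherwise; moreover d + N + c·d·L ≤ T. -/
open Finset

/-- One call to `Update`: if the total would exceed `T`, rescale first
(replace each count `s i` by `max 1 ⌊cf * s i⌋`), then add `d` to the count of `x`. -/
noncomputable def RFDupdate {N : ℕ} (cf : ℝ) (d T : ℕ) (s : Fin N → ℕ) (x : Fin N) : Fin N → ℕ :=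
  let s' : Fin N → ℕ :=
    if T < (∑ i, s i) + d then (fun i => max 1 ⌊cf * (s i : ℝ)⌋₊) else s
  fun i => if i = x then s' i + d else s' i

/-- State (counts) of Algorithm RFD after `k` update steps on the input sequence `xs`
(0-indexed: the `k`-th step processes symbol `xs (k-1)`). -/
noncomputable def RFDcounts {N : ℕ} (cf : ℝ) (d T : ℕ) (s0 : Fin N → ℕ) (xs : ℕ → Fin N) : ℕ → Fin N → ℕ
  | 0 => s0
  | k + 1 => RFDupdate cf d T (RFDcounts cf d T s0 xs k) (xs k)

/-- Total counter `t` after `k` update steps. -/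
noncomputable def RFDtotal {N : ℕ} (cf : ℝ) (d T : ℕ) (s0 : Fin N → ℕ) (xs : ℕ → Fin N) (k : ℕ) : ℕ :=
  ∑ i, RFDcounts cf d T s0 xs k i

/-- A rescale takes place in step `k ≥ 1` iff at the beginning of step `k`
the total plus `d` exceeds `T`. -/
def RFDrescaleAt {N : ℕ} (cf : ℝ) (d T : ℕ) (s0 : Fin N → ℕ) (xs : ℕ → Fin N) (k : ℕ) : Prop :=
  1 ≤ k ∧ T < RFDtotal cf d T s0 xs (k - 1) + d

/-- `P` is a partition of the integer interval `[a,b]` into consecutive closed intervals,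
listed in order; an interval `[i,j]` is represented by the pair `(i,j)`. -/
def ConsecPartition (a b : ℕ) (P : List (ℕ × ℕ)) : Prop :=
  P ≠ [] ∧ P.head?.map Prod.fst = some a ∧ P.getLast?.map Prod.snd = some b ∧
    (∀ p ∈ P, p.1 ≤ p.2) ∧ P.Chain' (fun p q => q.1 = p.2 + 1)

/-- `P` is the rescale partition of `[a,b]`: a partition into consecutive intervals `[i,j]`
such that no rescale occurs at steps `i,…,j-1`, and a rescale occurs at step `j` whenever
`j < b` (for the last interval, a rescale at its last step is optional). -/
def RFDrescalePartition {N : ℕ} (cf : ℝ) (d T : ℕ) (s0 : Fin N → ℕ) (xs : ℕ → Fin N)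
    (a b : ℕ) (P : List (ℕ × ℕ)) : Prop :=
  ConsecPartition a b P ∧
    (∀ p ∈ P, ∀ k, p.1 ≤ k → k < p.2 → ¬ RFDrescaleAt cf d T s0 xs k) ∧
    (∀ p ∈ P, p.2 < b → RFDrescaleAt cf d T s0 xs p.2)

/-- The probability `RFD(x; x^k)` that Algorithm RFD assigns to symbol `x` after `k` steps. -/
noncomputable def RFDprob {N : ℕ} (cf : ℝ) (d T : ℕ) (s0 : Fin N → ℕ) (xs : ℕ → Fin N)
    (k : ℕ) (x : Fin N) : ℝ :=
  (RFDcounts cf d T s0 xs k x : ℝ) / (RFDtotal cf d T s0 xs k : ℝ)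

/-- Ideal code length (in bits) of Algorithm RFD on steps `a,…,b` (1-indexed steps;
step `k` encodes symbol `xs (k-1)` using the prediction after `k-1` steps). -/
noncomputable def RFDcodeLen {N : ℕ} (cf : ℝ) (d T : ℕ) (s0 : Fin N → ℕ) (xs : ℕ → Fin N)
    (a b : ℕ) : ℝ :=
  -∑ k ∈ Finset.Icc a b, Real.logb 2 (RFDprob cf d T s0 xs (k - 1) (xs (k - 1)))

/-- Ideal code length (in bits) of a fixed distribution `p` on steps `a,…,b`. -/
noncomputable def distCodeLen {N : ℕ} (p : Fin N → ℝ) (xs : ℕ → Fin N) (a b : ℕ) : ℝ :=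
  -∑ k ∈ Finset.Icc a b, Real.logb 2 (p (xs (k - 1)))

theorem sum_RFDupdate {N : ℕ} (cf : ℝ) (d T : ℕ) (s : Fin N → ℕ) (x : Fin N) :
    ∑ i, RFDupdate cf d T s x i =
      (if T < (∑ i, s i) + d then ∑ i, max 1 ⌊cf * (s i : ℝ)⌋₊ else ∑ i, s i) + d := by
  have key (s' : Fin N → ℕ) : ∑ i, (if i = x then s' i + d else s' i) = ∑ i, s' i + d := by
    have h (i : Fin N) :
        (if i = x then s' i + d else s' i) = s' i + (if i = x then d else 0) := by
      split_ifs <;> simp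
    simp [h, Finset.sum_add_distrib]
  unfold RFDupdate
  split_ifs <;> exact key _

theorem one_le_RFDcounts {N : ℕ} (cf : ℝ) (d T : ℕ) {s0 : Fin N → ℕ} (xs : ℕ → Fin N)
    (hs0 : ∀ x, 1 ≤ s0 x) (k : ℕ) (i : Fin N) : 1 ≤ RFDcounts cf d T s0 xs k i := by
  induction k with
  | zero => exact hs0 i
  | succ k ih =>
    simp only [RFDcounts, RFDupdate]
    split_ifs <;> first | omega | exact le_add_right (le_max_left _ _) | exact le_max_left _ _

/-- Rescaling shrinks the excess of the total over its minimum `N` by the factor `cf`. -/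
theorem sum_rescale_le {N : ℕ} {cf : ℝ} (hc0 : 0 ≤ cf) (hc1 : cf ≤ 1) {s : Fin N → ℕ}
    (hs : ∀ i, 1 ≤ s i) :
    ((∑ i, max 1 ⌊cf * (s i : ℝ)⌋₊ : ℕ) : ℝ) ≤ N + cf * (((∑ i, s i : ℕ) : ℝ) - N) := by
  have h (i : Fin N) : ((max 1 ⌊cf * (s i : ℝ)⌋₊ : ℕ) : ℝ) ≤ 1 + cf * ((s i : ℝ) - 1) := by
    have h1 : (1 : ℝ) ≤ s i := by exact_mod_cast hs i
    have hf : (⌊cf * (s i : ℝ)⌋₊ : ℝ) ≤ cf * s i := Nat.floor_le (by positivity)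
    rw [Nat.cast_max, Nat.cast_one]
    exact max_le (by nlinarith) (by linarith)
  calc ((∑ i, max 1 ⌊cf * (s i : ℝ)⌋₊ : ℕ) : ℝ)
      = ∑ i, ((max 1 ⌊cf * (s i : ℝ)⌋₊ : ℕ) : ℝ) := Nat.cast_sum _ _
    _ ≤ ∑ i, (1 + cf * ((s i : ℝ) - 1)) := Finset.sum_le_sum fun i _ => h i
    _ = N + cf * (((∑ i, s i : ℕ) : ℝ) - N) := by
      simp [Finset.sum_add_distrib, ← Finset.mul_sum]

/-- Lemma 1: the total counter `t` at the end of the `k`-th call to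
`Update` (for `k = 0`: right after `Init`) satisfies `t ≤ d + N + c·d·L` if a rescale
takes place in step `k`, and `t ≤ T` otherwise; moreover `d + N + c·d·L ≤ T`,
where `L = (T - N)/d`. -/
theorem stmt0 (N d T : ℕ) (cf : ℝ) (hN : 1 < N)
    (s0 : Fin N → ℕ) (xs : ℕ → Fin N)
    (hd : 1 ≤ d) (hc0 : 0 ≤ cf) (hc1 : cf < 1)
    (hT : (d : ℝ) ≤ (1 - cf) * ((T : ℝ) - N))
    (hs0 : ∀ x, 1 ≤ s0 x) (hsum : ∑ x, s0 x ≤ T)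
    (k : ℕ) :
    ((d : ℝ) + N + cf * d * (((T : ℝ) - N) / d) ≤ T) ∧
    (RFDrescaleAt cf d T s0 xs k →
      (RFDtotal cf d T s0 xs k : ℝ) ≤ (d : ℝ) + N + cf * d * (((T : ℝ) - N) / d)) ∧
    (¬ RFDrescaleAt cf d T s0 xs k →
      (RFDtotal cf d T s0 xs k : ℝ) ≤ (T : ℝ)) := by
  have hd0 : (d : ℝ) ≠ 0 := by positivity
  rw [mul_assoc, mul_div_cancel₀ _ hd0]
  have hbound : (d : ℝ) + N + cf * ((T : ℝ) - N) ≤ T := by linarith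
  have hrescale (m : ℕ) (hm : RFDtotal cf d T s0 xs m ≤ T)
      (hr : T < RFDtotal cf d T s0 xs m + d) :
      (RFDtotal cf d T s0 xs (m + 1) : ℝ) ≤ d + N + cf * ((T : ℝ) - N) := by
    have hsum_le := sum_rescale_le hc0 hc1.le (one_le_RFDcounts cf d T xs hs0 m)
    have htotal := sum_RFDupdate cf d T (RFDcounts cf d T s0 xs m) (xs m)
    have hmT : (RFDtotal cf d T s0 xs m : ℝ) ≤ T := by exact_mod_cast hm
    unfold RFDtotal at hr hmT
    rw [if_pos hr] at htotal
    unfold RFDtotal RFDcounts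
    rw [htotal, Nat.cast_add]
    nlinarith
  have hle (m : ℕ) : RFDtotal cf d T s0 xs m ≤ T := by
    induction m with
    | zero => exact hsum
    | succ m ih =>
      by_cases hr : T < RFDtotal cf d T s0 xs m + d
      · exact_mod_cast (hrescale m ih hr).trans hbound
      · have htotal := sum_RFDupdate cf d T (RFDcounts cf d T s0 xs m) (xs m)
        unfold RFDtotal at hr
        rw [if_neg hr] at htotal
        unfold RFDtotal RFDcounts
        omega
  refine ⟨hbound, ?_, fun _ => by exact_mod_cast hle k⟩
  rintro ⟨hk, hr⟩
  obtain ⟨m, rfl⟩ := Nat.exists_eq_add_of_le' hk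
  exact hrescale m (hle m) hr
end

section
/- For any realization of Algorithm RFD on an input of length n, the segments of the rescale partition R of [1,n] satisfy: (1) the first segment has length m with 1 ≤ m ≤ L + 1; (2) any segment other than the first and the last has length m with ⌊(1−c)L⌋ ≤ m ≤ L; (3) if R has more than one segment, the last segment has length m with 1 ≤ m ≤ L. -/
open Finset

/-- One rescaled count is at most the corresponding affine contraction of the old count. -/
theorem max_one_floor_mul_le {cf : ℝ} (hc0 : 0 ≤ cf) (hc1 : cf ≤ 1) {m : ℕ} (hm : 1 ≤ m) :
    ((max 1 ⌊cf * (m : ℝ)⌋₊ : ℕ) : ℝ) ≤ cf * m + (1 - cf) := by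
  have hm' : (1 : ℝ) ≤ m := by exact_mod_cast hm
  have hfloor := Nat.floor_le (mul_nonneg hc0 (Nat.cast_nonneg (α := ℝ) m))
  rw [Nat.cast_max, Nat.cast_one]
  exact max_le (by nlinarith) (by linarith)

/-- Adding `d` at one coordinate adds `d` to the sum. -/
theorem sum_ite_add_eq {N : ℕ} (s : Fin N → ℕ) (x : Fin N) (d : ℕ) :
    ∑ i, (if i = x then s i + d else s i) = (∑ i, s i) + d := by
  have h : ∀ i, (if i = x then s i + d else s i) = s i + if i = x then d else 0 := by
    intro i
    split_ifs <;> rfl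
  simp [h, Finset.sum_add_distrib]

section Run

variable {N : ℕ} {cf : ℝ} {d T : ℕ} {s0 : Fin N → ℕ} {xs : ℕ → Fin N}

theorem RFDcounts_pos (hs0 : ∀ x, 1 ≤ s0 x) (k : ℕ) (i : Fin N) :
    1 ≤ RFDcounts cf d T s0 xs k i := by
  induction k generalizing i with
  | zero => exact hs0 i
  | succ k ih =>
    have h := ih i
    simp only [RFDcounts, RFDupdate]
    split_ifs <;> grind

theorem RFDtotal_ge (hs0 : ∀ x, 1 ≤ s0 x) (k : ℕ) : N ≤ RFDtotal cf d T s0 xs k := by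
  calc N = ∑ _i : Fin N, 1 := by simp
    _ ≤ RFDtotal cf d T s0 xs k := Finset.sum_le_sum fun i _ => RFDcounts_pos hs0 k i

theorem RFDtotal_succ_of_not_rescale {k : ℕ} (h : ¬ RFDrescaleAt cf d T s0 xs (k + 1)) :
    RFDtotal cf d T s0 xs (k + 1) = RFDtotal cf d T s0 xs k + d := by
  have h' : ¬ T < (∑ i, RFDcounts cf d T s0 xs k i) + d :=
    fun hlt => h ⟨Nat.le_add_left 1 k, hlt⟩
  simp only [RFDtotal, RFDcounts, RFDupdate, if_neg h', sum_ite_add_eq]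

theorem RFDtotal_succ_of_rescale {k : ℕ} (h : RFDrescaleAt cf d T s0 xs (k + 1)) :
    RFDtotal cf d T s0 xs (k + 1) =
      (∑ i, max 1 ⌊cf * (RFDcounts cf d T s0 xs k i : ℝ)⌋₊) + d := by
  have h' : T < (∑ i, RFDcounts cf d T s0 xs k i) + d := h.2
  simp only [RFDtotal, RFDcounts, RFDupdate, if_pos h', sum_ite_add_eq]

theorem RFDtotal_succ_ge_of_rescale {k : ℕ} (h : RFDrescaleAt cf d T s0 xs (k + 1)) :
    N + d ≤ RFDtotal cf d T s0 xs (k + 1) := by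
  rw [RFDtotal_succ_of_rescale h]
  gcongr
  calc N = ∑ _i : Fin N, 1 := by simp
    _ ≤ _ := Finset.sum_le_sum fun i _ => le_max_left _ _

theorem RFDtotal_succ_le_of_rescale (hc0 : 0 ≤ cf) (hc1 : cf ≤ 1) (hs0 : ∀ x, 1 ≤ s0 x)
    {k : ℕ} (h : RFDrescaleAt cf d T s0 xs (k + 1)) :
    (RFDtotal cf d T s0 xs (k + 1) : ℝ) ≤
      cf * RFDtotal cf d T s0 xs k + (1 - cf) * N + d := by
  rw [RFDtotal_succ_of_rescale h, Nat.cast_add, Nat.cast_sum]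
  gcongr
  calc _ ≤ ∑ i, (cf * (RFDcounts cf d T s0 xs k i : ℝ) + (1 - cf)) :=
        Finset.sum_le_sum fun i _ => max_one_floor_mul_le hc0 hc1 (RFDcounts_pos hs0 k i)
    _ = _ := by
        simp only [RFDtotal, Finset.sum_add_distrib, ← Finset.mul_sum, Nat.cast_sum,
          Finset.sum_const, Finset.card_univ, Fintype.card_fin, nsmul_eq_mul]
        ring

theorem RFDtotal_le (hc0 : 0 ≤ cf) (hc1 : cf ≤ 1)
    (hT : (d : ℝ) ≤ (1 - cf) * ((T : ℝ) - N)) (hs0 : ∀ x, 1 ≤ s0 x)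
    (hsum : ∑ x, s0 x ≤ T) (k : ℕ) : RFDtotal cf d T s0 xs k ≤ T := by
  induction k with
  | zero => exact hsum
  | succ k ih =>
    by_cases h : RFDrescaleAt cf d T s0 xs (k + 1)
    · have hle := RFDtotal_succ_le_of_rescale hc0 hc1 hs0 h
      have ih' : (RFDtotal cf d T s0 xs k : ℝ) ≤ T := by exact_mod_cast ih
      have hmul := mul_le_mul_of_nonneg_left ih' hc0
      have hreal : (RFDtotal cf d T s0 xs (k + 1) : ℝ) ≤ T := by linarith
      exact_mod_cast hreal
    · rw [RFDtotal_succ_of_not_rescale h]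
      by_contra hlt
      exact h ⟨Nat.le_add_left 1 k, not_le.mp hlt⟩

/-- The total grows linearly along a run of steps without a rescale. -/
theorem RFDtotal_add_of_not_rescale {a m : ℕ}
    (h : ∀ k, a + 1 ≤ k → k < a + 1 + m → ¬ RFDrescaleAt cf d T s0 xs k) :
    RFDtotal cf d T s0 xs (a + m) = RFDtotal cf d T s0 xs a + m * d := by
  induction m with
  | zero => simp
  | succ m ih =>
    have hstep := RFDtotal_succ_of_not_rescale (h (a + m + 1) (by omega) (by omega))
    rw [← Nat.add_assoc, hstep, ih fun k hk hk' => h k hk (by omega)]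
    ring

/-- A segment starting anywhere has length at most `(T - N) / d + 1`. -/
theorem segment_length_le_add_one (hc0 : 0 ≤ cf) (hc1 : cf ≤ 1)
    (hT : (d : ℝ) ≤ (1 - cf) * ((T : ℝ) - N)) (hs0 : ∀ x, 1 ≤ s0 x)
    (hsum : ∑ x, s0 x ≤ T) (hd : 1 ≤ d) {a m : ℕ}
    (h : ∀ k, a + 1 ≤ k → k < a + 1 + m → ¬ RFDrescaleAt cf d T s0 xs k) :
    ((m + 1 : ℕ) : ℝ) ≤ ((T : ℝ) - N) / d + 1 := by
  have hbound : N + m * d ≤ T :=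
    calc N + m * d ≤ RFDtotal cf d T s0 xs a + m * d := by gcongr; exact RFDtotal_ge hs0 a
      _ = RFDtotal cf d T s0 xs (a + m) := (RFDtotal_add_of_not_rescale h).symm
      _ ≤ T := RFDtotal_le hc0 hc1 hT hs0 hsum _
  have hbound' : (N : ℝ) + m * d ≤ T := by exact_mod_cast hbound
  have hd' : (0 : ℝ) < d := by exact_mod_cast hd
  push_cast
  gcongr
  rw [le_div_iff₀ hd']
  linarith

/-- A segment preceded by a rescale has length at most `(T - N) / d`. -/
theorem segment_length_le (hc0 : 0 ≤ cf) (hc1 : cf ≤ 1)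
    (hT : (d : ℝ) ≤ (1 - cf) * ((T : ℝ) - N)) (hs0 : ∀ x, 1 ≤ s0 x)
    (hsum : ∑ x, s0 x ≤ T) (hd : 1 ≤ d) {a m : ℕ} (ha : RFDrescaleAt cf d T s0 xs a)
    (h : ∀ k, a + 1 ≤ k → k < a + 1 + m → ¬ RFDrescaleAt cf d T s0 xs k) :
    ((m + 1 : ℕ) : ℝ) ≤ ((T : ℝ) - N) / d := by
  obtain ⟨a, rfl⟩ := Nat.exists_eq_add_of_le' ha.1
  have hbound : N + d + m * d ≤ T :=
    calc N + d + m * d ≤ RFDtotal cf d T s0 xs (a + 1) + m * d := by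
          gcongr; exact RFDtotal_succ_ge_of_rescale ha
      _ = RFDtotal cf d T s0 xs (a + 1 + m) := (RFDtotal_add_of_not_rescale h).symm
      _ ≤ T := RFDtotal_le hc0 hc1 hT hs0 hsum _
  have hbound' : (N : ℝ) + d + m * d ≤ T := by exact_mod_cast hbound
  have hd' : (0 : ℝ) < d := by exact_mod_cast hd
  rw [le_div_iff₀ hd']
  push_cast
  linarith

/-- A segment preceded by a rescale and ending in one has length at least
`⌊(1 - cf) * ((T - N) / d)⌋`. -/
theorem floor_le_segment_length (hc0 : 0 ≤ cf) (hc1 : cf ≤ 1)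
    (hT : (d : ℝ) ≤ (1 - cf) * ((T : ℝ) - N)) (hs0 : ∀ x, 1 ≤ s0 x)
    (hsum : ∑ x, s0 x ≤ T) (hd : 1 ≤ d) {a m : ℕ} (ha : RFDrescaleAt cf d T s0 xs a)
    (h : ∀ k, a + 1 ≤ k → k < a + 1 + m → ¬ RFDrescaleAt cf d T s0 xs k)
    (hend : RFDrescaleAt cf d T s0 xs (a + 1 + m)) :
    ⌊(1 - cf) * (((T : ℝ) - N) / d)⌋₊ ≤ m + 1 := by
  obtain ⟨a, rfl⟩ := Nat.exists_eq_add_of_le' ha.1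
  have hlt := hend.2
  rw [show a + 1 + 1 + m - 1 = a + 1 + m by omega, RFDtotal_add_of_not_rescale h] at hlt
  have hlt' : (T : ℝ) < RFDtotal cf d T s0 xs (a + 1) + m * d + d := by exact_mod_cast hlt
  have hle := RFDtotal_succ_le_of_rescale hc0 hc1 hs0 ha
  have ht : (RFDtotal cf d T s0 xs a : ℝ) ≤ T := by
    exact_mod_cast RFDtotal_le hc0 hc1 hT hs0 hsum a
  have hmul := mul_le_mul_of_nonneg_left ht hc0
  have hd' : (0 : ℝ) < d := by exact_mod_cast hd
  refine Nat.lt_succ_iff.mp (Nat.floor_lt' (Nat.succ_ne_zero _) |>.mpr ?_)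
  rw [← mul_div_assoc, div_lt_iff₀ hd']
  push_cast
  linarith

end Run

/-- Right endpoints increase strictly along a consecutive partition. -/
theorem ConsecPartition.snd_lt_snd {a b : ℕ} {P : List (ℕ × ℕ)} (hP : ConsecPartition a b P)
    {i j : ℕ} (hij : i < j) (hj : j < P.length) : P[i].2 < P[j].2 := by
  obtain ⟨-, -, -, hle, hchain⟩ := hP
  induction j, hij using Nat.le_induction with
  | base =>
    have hstep : P[i + 1].1 = P[i].2 + 1 := List.IsChain.getElem hchain i hj
    have hle' : P[i + 1].1 ≤ P[i + 1].2 := hle _ (List.getElem_mem hj)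
    change P[i].2 < P[i + 1].2
    omega
  | succ j hij ih =>
    have hstep := List.IsChain.getElem hchain j hj
    have hle' := hle _ (List.getElem_mem hj)
    have hlt := ih (by omega)
    omega

/-- Every segment of a consecutive partition but the last ends before the right endpoint. -/
theorem ConsecPartition.snd_lt {a b : ℕ} {P : List (ℕ × ℕ)} (hP : ConsecPartition a b P)
    {i : ℕ} (hi : i + 1 < P.length) : P[i].2 < b := by
  have hlast := hP.2.2.1
  rw [List.getLast?_eq_getElem?, List.getElem?_eq_getElem (by omega)] at hlast
  have hb : P[P.length - 1].2 = b := by simpa using hlast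
  exact hb ▸ hP.snd_lt_snd (by omega) (by omega)

/-- A segment other than the first starts right after a rescale step. -/
theorem RFDrescalePartition.exists_rescale_before {N : ℕ} {cf : ℝ} {d T : ℕ} {s0 : Fin N → ℕ}
    {xs : ℕ → Fin N} {a b : ℕ} {P : List (ℕ × ℕ)} (hP : RFDrescalePartition cf d T s0 xs a b P)
    {i : ℕ} (hi0 : 0 < i) (hi : i < P.length) :
    ∃ j, P[i].1 = j + 1 ∧ RFDrescaleAt cf d T s0 xs j := by
  obtain ⟨i, rfl⟩ := Nat.exists_eq_add_of_le' hi0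
  exact ⟨_, List.IsChain.getElem hP.1.2.2.2.2 i hi,
    hP.2.2 _ (List.getElem_mem _) (hP.1.snd_lt hi)⟩

/-- Lemma 2: segment lengths of the rescale partition `R` of `[1,n]`,
with `L = (T - N)/d`:
(1) the first segment has length `m` with `1 ≤ m ≤ L + 1`;
(2) any segment other than the first and the last has length `m` with `⌊(1-c)L⌋ ≤ m ≤ L`;
(3) if `R` has more than one segment, the last segment has length `m` with `1 ≤ m ≤ L`. -/
theorem stmt1 (N d T : ℕ) (cf : ℝ) (hN : 1 < N)
    (s0 : Fin N → ℕ) (xs : ℕ → Fin N)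
    (hd : 1 ≤ d) (hc0 : 0 ≤ cf) (hc1 : cf < 1)
    (hT : (d : ℝ) ≤ (1 - cf) * ((T : ℝ) - N))
    (hs0 : ∀ x, 1 ≤ s0 x) (hsum : ∑ x, s0 x ≤ T)
    (n : ℕ) (hn : 1 ≤ n)
    (R : List (ℕ × ℕ)) (hR : RFDrescalePartition cf d T s0 xs 1 n R)
    (L : ℝ) (hL : L = ((T : ℝ) - N) / d) :
    (∀ p : ℕ × ℕ, R.head? = some p →
        1 ≤ p.2 - p.1 + 1 ∧ ((p.2 - p.1 + 1 : ℕ) : ℝ) ≤ L + 1) ∧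
    (∀ (i : ℕ) (p : ℕ × ℕ), R[i]? = some p → 0 < i → i + 1 < R.length →
        ⌊(1 - cf) * L⌋₊ ≤ p.2 - p.1 + 1 ∧ ((p.2 - p.1 + 1 : ℕ) : ℝ) ≤ L) ∧
    (1 < R.length → ∀ p : ℕ × ℕ, R.getLast? = some p →
        1 ≤ p.2 - p.1 + 1 ∧ ((p.2 - p.1 + 1 : ℕ) : ℝ) ≤ L) := by
  subst hL
  have hseg : ∀ p ∈ R, ∀ a, p.1 = a + 1 → ∀ k, a + 1 ≤ k → k < a + 1 + (p.2 - p.1) →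
      ¬ RFDrescaleAt cf d T s0 xs k := by
    intro p hp a ha k hk hk'
    exact hR.2.1 p hp k (by omega) (by omega)
  have hupper : ∀ (i : ℕ) (p : ℕ × ℕ), R[i]? = some p → 0 < i →
      ((p.2 - p.1 + 1 : ℕ) : ℝ) ≤ ((T : ℝ) - N) / d := by
    intro i p hp hi0
    obtain ⟨hi, rfl⟩ := List.getElem?_eq_some_iff.mp hp
    obtain ⟨a, ha, hresc⟩ := hR.exists_rescale_before hi0 hi
    exact segment_length_le hc0 hc1.le hT hs0 hsum hd hresc (hseg _ (List.getElem_mem hi) a ha)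
  refine ⟨fun p hp => ⟨Nat.le_add_left _ _, ?_⟩, fun i p hp hi0 hi => ⟨?_, hupper i p hp hi0⟩,
    fun hlen p hp => ⟨Nat.le_add_left _ _, ?_⟩⟩
  · have hfst : p.1 = 0 + 1 := by simpa [hp] using hR.1.2.1
    exact segment_length_le_add_one hc0 hc1.le hT hs0 hsum hd
      (hseg p (List.mem_of_mem_head? hp) 0 hfst)
  · obtain ⟨hi', rfl⟩ := List.getElem?_eq_some_iff.mp hp
    obtain ⟨a, ha, hresc⟩ := hR.exists_rescale_before hi0 hi'
    have hmem : R[i] ∈ R := List.getElem_mem hi'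
    refine floor_le_segment_length hc0 hc1.le hT hs0 hsum hd hresc (hseg _ hmem a ha) ?_
    have hle := hR.1.2.2.2.1 _ hmem
    rw [← ha, Nat.add_sub_cancel' hle]
    exact hR.2.2 _ hmem (hR.1.snd_lt hi)
  · rw [List.getLast?_eq_getElem?] at hp
    exact hupper _ p hp (by omega)
end

section
/- Let a > 0 be real, let c(1),…,c(M) be positive integers (M ≥ 1) with Σ_{x=1}^M c(x) = n. For a sequence x^n over {1,…,M} in which symbol x occurs exactly c(x) times, define s(x; x^k) := a + |{1 ≤ i ≤ k : x_i = x}|. Then ∏_{k=1}^n s(x_k; x^{k−1}) ≥ (a·M/n)^M · ∏_{x=1}^M c(x)! · ∏_{k=1}^{n−M} (a+k)/k. -/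
open Finset

/-- A product over the positions of a sequence, of a function of the symbol's previous count,
regroups as a product over the symbols. -/
lemma prod_range_previous_count {ι R : Type*} [Fintype ι] [DecidableEq ι] [CommMonoid R]
    (f : ℕ → R) (xs : ℕ → ι) (n : ℕ) :
    ∏ k ∈ range n, f #{i ∈ range k | xs i = xs k} =
      ∏ x, ∏ j ∈ range #{i ∈ range n | xs i = x}, f j := by
  induction n with
  | zero => simp
  | succ n ih =>
    have h (x : ι) : ∏ j ∈ range #{i ∈ range (n + 1) | xs i = x}, f j =
        (∏ j ∈ range #{i ∈ range n | xs i = x}, f j) *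
          if xs n = x then f #{i ∈ range n | xs i = x} else 1 := by
      rw [range_add_one, filter_insert]
      split_ifs with hx
      · rw [card_insert_of_notMem (by simp), prod_range_succ]
      · simp
    simp_rw [prod_range_succ, ih, h, prod_mul_distrib]
    simp

lemma prod_Icc_add_div_pos {a : ℝ} (ha : 0 ≤ a) (m : ℕ) :
    0 < ∏ k ∈ Icc 1 m, ((a + k) / (k : ℝ)) := by
  refine prod_pos fun k hk => ?_
  have : (0 : ℝ) < k := by exact_mod_cast (mem_Icc.mp hk).1
  positivity

lemma prod_Icc_add_div_add_le {a : ℝ} (ha : 0 ≤ a) (m l : ℕ) :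
    ∏ k ∈ Icc 1 (m + l), ((a + k) / (k : ℝ)) ≤
      (∏ k ∈ Icc 1 m, ((a + k) / (k : ℝ))) * ∏ k ∈ Icc 1 l, ((a + k) / (k : ℝ)) := by
  induction l with
  | zero => simp
  | succ l ih =>
    rw [← add_assoc, prod_Icc_succ_top (by lia), prod_Icc_succ_top (by lia), ← mul_assoc]
    have hm := prod_Icc_add_div_pos ha m
    have hl := prod_Icc_add_div_pos ha l
    refine mul_le_mul ih ?_ (by positivity) (by positivity)
    push_cast
    rw [div_le_div_iff₀ (by positivity) (by positivity)]
    nlinarith [mul_nonneg ha (Nat.cast_nonneg (α := ℝ) m)]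

lemma prod_Icc_add_div_sum_le {ι : Type*} {a : ℝ} (ha : 0 ≤ a) (s : Finset ι) (m : ι → ℕ) :
    ∏ k ∈ Icc 1 (∑ x ∈ s, m x), ((a + k) / (k : ℝ)) ≤
      ∏ x ∈ s, ∏ k ∈ Icc 1 (m x), ((a + k) / (k : ℝ)) := by
  classical
  induction s using Finset.induction_on with
  | empty => simp
  | insert x s hx ih =>
    rw [sum_insert hx, prod_insert hx]
    exact (prod_Icc_add_div_add_le ha _ _).trans
      (mul_le_mul_of_nonneg_left ih (prod_Icc_add_div_pos ha _).le)

lemma prod_range_succ_add_eq (a : ℝ) (m : ℕ) :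
    ∏ j ∈ range (m + 1), (a + (j : ℝ)) =
      a / ((m + 1 : ℕ) : ℝ) * (m + 1).factorial * ∏ k ∈ Icc 1 m, ((a + k) / (k : ℝ)) := by
  induction m with
  | zero => simp
  | succ m ih =>
    rw [prod_range_succ, ih, prod_Icc_succ_top (by lia), Nat.factorial_succ (m + 1)]
    push_cast
    field_simp

/-- The inequality of arithmetic and geometric means, without roots. -/
lemma prod_le_sum_div_card_pow {ι : Type*} (s : Finset ι) (hs : s.Nonempty) (z : ι → ℝ)
    (hz : ∀ i ∈ s, 0 ≤ z i) : ∏ i ∈ s, z i ≤ ((∑ i ∈ s, z i) / #s) ^ #s := by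
  have hcard : (0 : ℝ) < #s := by exact_mod_cast hs.card_pos
  have h := Real.geom_mean_le_arith_mean s (fun _ => 1) z (by simp) (by simpa using hs) hz
  simp only [Real.rpow_one, sum_const, nsmul_eq_mul, mul_one, one_mul] at h
  have hp := prod_nonneg hz
  calc ∏ i ∈ s, z i = ((∏ i ∈ s, z i) ^ ((#s : ℝ)⁻¹)) ^ #s :=
        (Real.rpow_inv_natCast_pow hp hs.card_pos.ne').symm
    _ ≤ _ := pow_le_pow_left₀ (by positivity) h _

/-- numerator lower bound. Let `a > 0`, let `c(1),…,c(M)` be positive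
integers with sum `n`, and let `x^n` be a sequence over `{1,…,M}` (0-indexed here:
`xs i` is the `(i+1)`-st symbol) in which symbol `x` occurs exactly `c(x)` times.
With `s(x; x^k) = a + |{1 ≤ i ≤ k : x_i = x}|`, we have
`∏_{k=1}^n s(x_k; x^{k-1}) ≥ (a·M/n)^M · ∏_x c(x)! · ∏_{k=1}^{n-M} (a+k)/k`. -/
theorem stmt7 (M : ℕ) (hM : 1 ≤ M) (a : ℝ) (ha : 0 < a)
    (cnt : Fin M → ℕ) (hpos : ∀ x, 0 < cnt x) (n : ℕ) (hsum : ∑ x, cnt x = n)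
    (xs : ℕ → Fin M)
    (hocc : ∀ x, ((Finset.range n).filter (fun i => xs i = x)).card = cnt x) :
    (a * M / n) ^ M * (∏ x, ((cnt x).factorial : ℝ)) *
        ∏ k ∈ Finset.Icc 1 (n - M), ((a + k) / (k : ℝ)) ≤
      ∏ k ∈ Finset.range n,
        (a + (((Finset.range k).filter (fun i => xs i = xs k)).card : ℝ)) := by
  have hM' : (0 : ℝ) < M := by exact_mod_cast hM
  have hprod : ∏ k ∈ range n, (a + (#{i ∈ range k | xs i = xs k} : ℝ)) =
      (∏ x, a / (cnt x : ℝ)) * (∏ x, ((cnt x).factorial : ℝ)) *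
        ∏ x, ∏ k ∈ Icc 1 (cnt x - 1), ((a + k) / (k : ℝ)) := by
    rw [prod_range_previous_count (fun j : ℕ => a + (j : ℝ)) xs n, ← prod_mul_distrib,
      ← prod_mul_distrib]
    refine prod_congr rfl fun x _ => ?_
    rw [hocc x]
    have h := prod_range_succ_add_eq a (cnt x - 1)
    rwa [Nat.sub_add_cancel (hpos x)] at h
  have hsub : n - M = ∑ x, (cnt x - 1) := by
    rw [sum_tsub_distrib _ fun x _ => hpos x, hsum]
    simp
  have hamgm : (a * M / n) ^ M ≤ ∏ x, a / (cnt x : ℝ) := by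
    have h := prod_le_sum_div_card_pow univ ⟨⟨0, hM⟩, mem_univ _⟩ (fun x => (cnt x : ℝ))
      fun _ _ => Nat.cast_nonneg _
    rw [← Nat.cast_sum, hsum, card_univ, Fintype.card_fin] at h
    have hc : 0 < ∏ x, (cnt x : ℝ) := prod_pos fun x _ => by exact_mod_cast hpos x
    rw [prod_div_distrib, prod_const, card_univ, Fintype.card_fin,
      show a * M / n = a / ((n : ℝ) / M) by rw [div_div_eq_mul_div], div_pow]
    exact div_le_div_of_nonneg_left (by positivity) hc h
  rw [hprod, hsub]
  refine mul_le_mul (mul_le_mul_of_nonneg_right hamgm (by positivity))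
    (prod_Icc_add_div_sum_le ha.le _ _) (prod_Icc_add_div_pos ha.le _).le (by positivity)
end

section
/- Let a > 0 be real, let M ≥ 1, and let c(1),…,c(M) be positive integers with Σ_{x=1}^M c(x) = n. Then ∏_{x=1}^M ∏_{l=1}^{c(x)−1} (1 + a/l) ≥ ∏_{k=1}^{n−M} (k+a)/k. -/
open Finset

lemma prod_one_add_div_nonneg {a : ℝ} (ha : 0 ≤ a) (m : ℕ) :
    0 ≤ ∏ l ∈ Finset.Icc 1 m, (1 + a / (l : ℝ)) :=
  Finset.prod_nonneg fun _ _ => by positivity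

/-- The products `∏_{l=1}^m (1 + a/l)` are submultiplicative in `m`. -/
lemma prod_one_add_div_add_le {a : ℝ} (ha : 0 ≤ a) (m k : ℕ) :
    ∏ l ∈ Finset.Icc 1 (m + k), (1 + a / (l : ℝ)) ≤
      (∏ l ∈ Finset.Icc 1 m, (1 + a / (l : ℝ))) * ∏ l ∈ Finset.Icc 1 k, (1 + a / (l : ℝ)) := by
  induction k with
  | zero => simp
  | succ k ih =>
    rw [← add_assoc, Finset.prod_Icc_succ_top (by lia), Finset.prod_Icc_succ_top (by lia),
      ← mul_assoc]
    have hfactor : 1 + a / ((m + k + 1 : ℕ) : ℝ) ≤ 1 + a / ((k + 1 : ℕ) : ℝ) := by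
      gcongr
      lia
    exact mul_le_mul ih hfactor (by positivity)
      (mul_nonneg (prod_one_add_div_nonneg ha m) (prod_one_add_div_nonneg ha k))

lemma prod_one_add_div_sum_le {ι : Type*} {a : ℝ} (ha : 0 ≤ a) (s : Finset ι) (d : ι → ℕ) :
    ∏ l ∈ Finset.Icc 1 (∑ x ∈ s, d x), (1 + a / (l : ℝ)) ≤
      ∏ x ∈ s, ∏ l ∈ Finset.Icc 1 (d x), (1 + a / (l : ℝ)) := by
  classical
  induction s using Finset.induction_on with
  | empty => simp
  | insert x s hx ih =>
    rw [Finset.sum_insert hx, Finset.prod_insert hx]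
    exact (prod_one_add_div_add_le ha _ _).trans
      (mul_le_mul_of_nonneg_left ih (prod_one_add_div_nonneg ha _))

/-- product rearrangement inequality. For real `a > 0` and positive
integers `c(1),…,c(M)` with sum `n`,
`∏_{x=1}^M ∏_{l=1}^{c(x)-1} (1 + a/l) ≥ ∏_{k=1}^{n-M} (k+a)/k`. -/
theorem stmt8 (M : ℕ) (hM : 1 ≤ M) (a : ℝ) (ha : 0 < a)
    (cnt : Fin M → ℕ) (hpos : ∀ x, 0 < cnt x) (n : ℕ) (hsum : ∑ x, cnt x = n) :
    ∏ k ∈ Finset.Icc 1 (n - M), (((k : ℝ) + a) / (k : ℝ)) ≤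
      ∏ x, ∏ l ∈ Finset.Icc 1 (cnt x - 1), (1 + a / (l : ℝ)) := by
  have hn : n - M = ∑ x, (cnt x - 1) := by
    rw [Finset.sum_tsub_distrib _ fun x _ => hpos x, hsum]
    simp
  rw [hn]
  refine le_trans (le_of_eq (Finset.prod_congr rfl fun k hk => ?_))
    (prod_one_add_div_sum_le ha.le _ _)
  have hk0 : (k : ℝ) ≠ 0 := by
    have := (Finset.mem_Icc.mp hk).1
    exact_mod_cast (by lia : k ≠ 0)
  rw [add_div, div_self hk0]
end

section
/- Consider a realization of Algorithm RFD on x^n whose rescale partition is {[1,n]}, and let t0 = Σ_{y∈X} s0(y). For any probability distribution p on X, ℓ(x^n; RFD) − ℓ(x^n; p) ≤ ((N−1)·d + t0 − 1)/d · log₂ n + log₂( (t0/d)·e^{t0/d} ) + N·log₂ d. -/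
open Finset

/-- Regrouping a sum along a sequence by letter and by the rank of each occurrence. -/
theorem sum_range_count_eq {α M : Type*} [Fintype α] [DecidableEq α] [AddCommMonoid M]
    (xs : ℕ → α) (f : α → ℕ → M) (n : ℕ) :
    ∑ k ∈ range n, f (xs k) (Nat.count (fun i => xs i = xs k) k) =
      ∑ x, ∑ j ∈ range (Nat.count (fun i => xs i = x) n), f x j := by
  induction n with
  | zero => simp
  | succ n ih =>
    have hstep : ∀ x, ∑ j ∈ range (Nat.count (fun i => xs i = x) (n + 1)), f x j =
        ∑ j ∈ range (Nat.count (fun i => xs i = x) n), f x j +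
          if xs n = x then f x (Nat.count (fun i => xs i = x) n) else 0 := by
      intro x
      by_cases h : xs n = x <;> simp [Nat.count_succ, h, sum_range_succ]
    simp only [hstep, sum_add_distrib, sum_range_succ, ih, sum_ite_eq, mem_univ, if_true]

theorem sum_count_eq {α : Type*} [Fintype α] [DecidableEq α] (xs : ℕ → α) (n : ℕ) :
    ∑ x, Nat.count (fun i => xs i = x) n = n := by
  simpa using (sum_range_count_eq xs (fun _ _ => (1 : ℕ)) n).symm

/-- As long as no rescale occurs, each count grows by `d` per occurrence of its letter. -/
theorem RFDcounts_eq_of_no_rescale {N : ℕ} {cf : ℝ} {d T : ℕ} {s0 : Fin N → ℕ} {xs : ℕ → Fin N}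
    {n : ℕ} (hnores : ∀ k, 1 ≤ k → k < n → ¬ RFDrescaleAt cf d T s0 xs k)
    {k : ℕ} (hk : k < n) (x : Fin N) :
    RFDcounts cf d T s0 xs k x = s0 x + d * Nat.count (fun i => xs i = x) k := by
  induction k generalizing x with
  | zero => simp [RFDcounts]
  | succ k ih =>
    have h := hnores (k + 1) (by omega) hk
    simp only [RFDrescaleAt, RFDtotal, Nat.add_sub_cancel, not_and] at h
    have h' := h (by omega)
    have hx := ih (by omega) x
    by_cases hxk : xs k = x
    · simp [RFDcounts, RFDupdate, h', hx, Nat.count_succ, hxk, mul_add, add_assoc]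
    · simp [RFDcounts, RFDupdate, h', hx, Nat.count_succ, hxk, Ne.symm hxk]

theorem RFDtotal_eq_of_no_rescale {N : ℕ} {cf : ℝ} {d T : ℕ} {s0 : Fin N → ℕ} {xs : ℕ → Fin N}
    {n : ℕ} (hnores : ∀ k, 1 ≤ k → k < n → ¬ RFDrescaleAt cf d T s0 xs k)
    {k : ℕ} (hk : k < n) :
    RFDtotal cf d T s0 xs k = ∑ x, s0 x + d * k := by
  simp only [RFDtotal, RFDcounts_eq_of_no_rescale hnores hk, sum_add_distrib, ← mul_sum,
    sum_count_eq]

theorem sum_log_add_le_harmonic {a : ℝ} (ha : 0 < a) (m : ℕ) :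
    ∑ k ∈ range (m + 1), Real.log (a + k) ≤
      Real.log (m.factorial : ℝ) + Real.log a + a * (harmonic m : ℝ) := by
  induction m with
  | zero => simp
  | succ m ih =>
    rw [sum_range_succ, Nat.factorial_succ, harmonic_succ]
    have hm : (0 : ℝ) < (m + 1 : ℕ) := by positivity
    have hf : (m.factorial : ℝ) ≠ 0 := by positivity
    have hlog : Real.log (a + (m + 1 : ℕ)) ≤ Real.log (m + 1 : ℕ) + a * ((m + 1 : ℕ) : ℝ)⁻¹ := by
      have h := Real.log_le_sub_one_of_pos (show 0 < (a + (m + 1 : ℕ)) / (m + 1 : ℕ) by positivity)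
      rw [Real.log_div (by positivity) hm.ne', add_div, div_self hm.ne', div_eq_mul_inv] at h
      linarith
    rw [Nat.cast_mul, Real.log_mul hm.ne' hf]
    push_cast at hlog ih ⊢
    linarith

/-- Upper bound for the logarithm of the rising factorial `a (a + 1) ⋯ (a + n - 1)`. -/
theorem sum_log_add_le {a : ℝ} (ha : 0 < a) {n : ℕ} (hn : 1 ≤ n) :
    ∑ k ∈ range n, Real.log (a + k) + Real.log n ≤
      Real.log (n.factorial : ℝ) + Real.log a + a + a * Real.log n := by
  obtain ⟨m, rfl⟩ : ∃ m, n = m + 1 := ⟨n - 1, by omega⟩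
  have h := sum_log_add_le_harmonic ha m
  have hH : (harmonic m : ℝ) ≤ 1 + Real.log (m + 1 : ℕ) := by
    have hmono : Real.log m ≤ Real.log (m + 1 : ℕ) := by
      rcases Nat.eq_zero_or_pos m with rfl | hm
      · simp
      · exact Real.log_le_log (by positivity) (by simp)
    linarith [harmonic_le_one_add_log m]
  have hmul := mul_le_mul_of_nonneg_left hH ha.le
  rw [Nat.factorial_succ, Nat.cast_mul, Real.log_mul (by positivity) (by positivity)]
  linarith

theorem log_add_mul_sub_le {w : ℝ} (hw0 : 0 ≤ w) (hw1 : w ≤ 1) {y : ℝ} (hy : 0 < y) :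
    Real.log y + w * (Real.log (y + 1) - Real.log y) ≤ Real.log (y + w) := by
  have h := strictConcaveOn_log_Ioi.concaveOn.2 (Set.mem_Ioi.2 hy)
    (Set.mem_Ioi.2 (by linarith : 0 < y + 1)) (sub_nonneg.2 hw1) hw0 (by ring)
  simp only [smul_eq_mul] at h
  rw [show (1 - w) * y + w * (y + 1) = y + w by ring] at h
  linarith

/-- Lower bound for the logarithm of the rising factorial `b (b + 1) ⋯ (b + m - 1)`. -/
theorem log_factorial_le_sum_log_add {w b : ℝ} (hw0 : 0 < w) (hw1 : w ≤ 1) (hb : w ≤ b) (m : ℕ) :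
    Real.log (m.factorial : ℝ) ≤
      ∑ j ∈ range m, Real.log (b + j) - Real.log w + (1 - w) * Real.log m := by
  have hlogw : Real.log w ≤ 0 := Real.log_nonpos hw0.le hw1
  induction m with
  | zero => simpa using hlogw
  | succ m ih =>
    rcases Nat.eq_zero_or_pos m with rfl | hm
    · simpa using Real.log_le_log hw0 hb
    · have hm' : (0 : ℝ) < m := by exact_mod_cast hm
      have h := log_add_mul_sub_le hw0.le hw1 hm'
      have hmono : Real.log (m + w) ≤ Real.log (b + m) :=
        Real.log_le_log (by positivity) (by linarith)
      rw [sum_range_succ, Nat.factorial_succ, Nat.cast_mul,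
        Real.log_mul (by positivity) (by positivity)]
      push_cast
      linarith

/-- A multinomial probability is at most one. -/
theorem log_factorial_sum_add_le {α : Type*} [Fintype α] [DecidableEq α] {p : α → ℝ}
    (hp0 : ∀ x, 0 ≤ p x) (hp1 : ∑ x, p x = 1) (m : α → ℕ) (hpos : ∀ x, m x ≠ 0 → p x ≠ 0) :
    Real.log ((∑ x, m x).factorial : ℝ) + ∑ x, m x * Real.log (p x) ≤
      ∑ x, Real.log ((m x).factorial : ℝ) := by
  have hle : (Nat.multinomial univ m : ℝ) * ∏ x, p x ^ m x ≤ 1 := by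
    have h := sum_pow_eq_sum_piAntidiag univ p (∑ x, m x)
    rw [hp1, one_pow] at h
    rw [h]
    exact single_le_sum
      (f := fun k : α → ℕ => (Nat.multinomial univ k : ℝ) * ∏ x, p x ^ k x)
      (fun k _ => mul_nonneg (Nat.cast_nonneg _) (prod_nonneg fun x _ => pow_nonneg (hp0 x) _))
      (by simp)
  have hpow : ∀ x ∈ univ, p x ^ m x ≠ 0 := by
    intro x _
    by_cases hx : m x = 0
    · simp [hx]
    · exact pow_ne_zero _ (hpos x hx)
  have hfac : ∀ x ∈ univ, ((m x).factorial : ℝ) ≠ 0 := fun x _ => by positivity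
  have hmult : (Nat.multinomial univ m : ℝ) ≠ 0 := by
    exact_mod_cast (Nat.multinomial_pos univ m).ne'
  have hspec : (∏ x, ((m x).factorial : ℝ)) * Nat.multinomial univ m =
      ((∑ x, m x).factorial : ℝ) := by
    exact_mod_cast Nat.multinomial_spec univ m
  have hlog := Real.log_nonpos
    (mul_nonneg (Nat.cast_nonneg _) (prod_nonneg fun x _ => pow_nonneg (hp0 x) _)) hle
  rw [Real.log_mul hmult (prod_ne_zero_iff.2 hpow), Real.log_prod hpow] at hlog
  simp only [Real.log_pow] at hlog
  rw [← hspec, Real.log_mul (prod_ne_zero_iff.2 hfac) hmult, Real.log_prod hfac]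
  linarith

/-- Redundancy of the sequential estimator with initial weights `b x ≥ w` and unit increments,
relative to a fixed distribution. -/
theorem sum_log_sub_sum_log_add_le {α : Type*} [Fintype α] [DecidableEq α] {w : ℝ} (hw0 : 0 < w)
    (hw1 : w ≤ 1) {b : α → ℝ} (hb : ∀ x, w ≤ b x) {a : ℝ} (ha : 0 < a)
    {p : α → ℝ} (hp0 : ∀ x, 0 ≤ p x) (hp1 : ∑ x, p x = 1) (xs : ℕ → α) {n : ℕ} (hn : 1 ≤ n)
    (hpos : ∀ k < n, p (xs k) ≠ 0) :
    ∑ k ∈ range n, Real.log (a + k) -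
        ∑ k ∈ range n, Real.log (b (xs k) + Nat.count (fun i => xs i = xs k) k) +
        ∑ k ∈ range n, Real.log (p (xs k)) ≤
      (Fintype.card α * (1 - w) + a - 1) * Real.log n + Real.log a + a -
        Fintype.card α * Real.log w := by
  set m : α → ℕ := fun x => Nat.count (fun i => xs i = x) n
  have hsum : ∑ x, m x = n := sum_count_eq xs n
  have hnum := sum_log_add_le ha hn
  have hden : ∑ x, Real.log ((m x).factorial : ℝ) ≤
      ∑ x, (∑ j ∈ range (m x), Real.log (b x + j) - Real.log w + (1 - w) * Real.log n) := by
    refine sum_le_sum fun x _ => (log_factorial_le_sum_log_add hw0 hw1 (hb x) (m x)).trans ?_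
    have hmn : m x ≤ n := Nat.count_le _
    have hlog : Real.log (m x) ≤ Real.log n := by
      rcases Nat.eq_zero_or_pos (m x) with h | h
      · simpa [h] using Real.log_natCast_nonneg n
      · exact Real.log_le_log (by positivity) (by exact_mod_cast hmn)
    have := mul_le_mul_of_nonneg_left hlog (sub_nonneg.2 hw1)
    linarith
  have hmult := log_factorial_sum_add_le hp0 hp1 m (by
    intro x hx
    obtain ⟨k, hk, rfl⟩ : ∃ k < n, xs k = x := by
      by_contra! h
      exact hx (Nat.count_iff_forall_not.2 fun {k} hk => h k hk)
    exact hpos k hk)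
  rw [hsum] at hmult
  have hregroup_b := sum_range_count_eq xs (fun x j => Real.log (b x + j)) n
  have hregroup_p := sum_range_count_eq xs (fun x _ => Real.log (p x)) n
  simp only [sum_const, card_range, nsmul_eq_mul] at hregroup_p
  rw [hregroup_b, hregroup_p]
  simp only [sum_add_distrib, sum_sub_distrib, sum_const, card_univ, nsmul_eq_mul] at hden
  linarith

/-- Proposition 6: for a realization of Algorithm RFD whose rescale
partition is `{[1,n]}` (no rescale in steps `1,…,n-1`), `t0 = Σ_y s0(y)`, and any
probability distribution `p` on `X`:
`ℓ(x^n; RFD) - ℓ(x^n; p) ≤ ((N-1)·d + t0 - 1)/d · log₂ n + log₂((t0/d)·e^(t0/d)) + N·log₂ d`.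
If `p` assigns probability `0` to some occurring letter, then `ℓ(x^n; p) = +∞` and the
claim holds trivially (first disjunct). -/
theorem stmt10 (N d T : ℕ) (cf : ℝ) (hN : 1 < N)
    (s0 : Fin N → ℕ) (xs : ℕ → Fin N)
    (hd : 1 ≤ d) (hc0 : 0 ≤ cf) (hc1 : cf < 1)
    (hT : (d : ℝ) ≤ (1 - cf) * ((T : ℝ) - N))
    (hs0 : ∀ x, 1 ≤ s0 x) (hsum : ∑ x, s0 x ≤ T)
    (n : ℕ) (hn : 1 ≤ n)
    (hnores : ∀ k, 1 ≤ k → k < n → ¬ RFDrescaleAt cf d T s0 xs k)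
    (t0 : ℕ) (ht0 : t0 = ∑ y, s0 y)
    (p : Fin N → ℝ) (hp0 : ∀ x, 0 ≤ p x) (hp1 : ∑ x, p x = 1) :
    (∃ k ∈ Finset.Icc 1 n, p (xs (k - 1)) = 0) ∨
      RFDcodeLen cf d T s0 xs 1 n - distCodeLen p xs 1 n ≤
        ((((N : ℝ) - 1) * d + (t0 : ℝ) - 1) / d) * Real.logb 2 n
        + Real.logb 2 ((t0 : ℝ) / d * Real.exp ((t0 : ℝ) / d))
        + (N : ℝ) * Real.logb 2 d := by
  by_cases hzero : ∃ k ∈ Finset.Icc 1 n, p (xs (k - 1)) = 0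
  · exact Or.inl hzero
  right
  have hpos : ∀ k < n, p (xs k) ≠ 0 := fun k hk h =>
    hzero ⟨k + 1, Finset.mem_Icc.2 ⟨by omega, by omega⟩, by simpa using h⟩
  have hdpos : (0 : ℝ) < d := by exact_mod_cast hd
  have hd1 : (1 : ℝ) ≤ d := by exact_mod_cast hd
  have ht0pos : (0 : ℝ) < t0 := by
    have hle := Finset.single_le_sum (f := s0) (fun _ _ => Nat.zero_le _)
      (Finset.mem_univ (xs 0))
    have := hs0 (xs 0)
    exact_mod_cast (show 0 < t0 by omega)
  have hs0pos : ∀ x, (1 : ℝ) ≤ s0 x := fun x => by exact_mod_cast hs0 x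
  have hred := sum_log_sub_sum_log_add_le (w := (d : ℝ)⁻¹) (inv_pos.2 hdpos)
    (inv_le_one_of_one_le₀ hd1) (b := fun x => (s0 x : ℝ) / d) (a := (t0 : ℝ) / d)
    (fun x => by rw [inv_eq_one_div]; gcongr; exact hs0pos x) (by positivity) hp0 hp1 xs hn hpos
  have hprob : ∀ k ∈ range n, Real.log (RFDprob cf d T s0 xs k (xs k)) =
      Real.log ((s0 (xs k) : ℝ) / d + Nat.count (fun i => xs i = xs k) k) -
        Real.log ((t0 : ℝ) / d + k) := by
    intro k hk
    have hk := Finset.mem_range.1 hk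
    have hs := hs0pos (xs k)
    rw [← Real.log_div (by positivity) (by positivity), RFDprob,
      RFDcounts_eq_of_no_rescale hnores hk, RFDtotal_eq_of_no_rescale hnores hk, ← ht0]
    congr 1
    push_cast
    field_simp
  have hshift : ∀ f : ℕ → ℝ, ∑ k ∈ Finset.Icc 1 n, f (k - 1) = ∑ k ∈ range n, f k := by
    intro f
    rw [← Finset.Ico_add_one_right_eq_Icc, Finset.sum_Ico_eq_sum_range]
    simp
  have hlen : RFDcodeLen cf d T s0 xs 1 n - distCodeLen p xs 1 n =
      (∑ k ∈ range n, Real.log ((t0 : ℝ) / d + k) -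
        ∑ k ∈ range n, Real.log ((s0 (xs k) : ℝ) / d + Nat.count (fun i => xs i = xs k) k) +
        ∑ k ∈ range n, Real.log (p (xs k))) / Real.log 2 := by
    rw [RFDcodeLen, distCodeLen, hshift fun k => Real.logb 2 (RFDprob cf d T s0 xs k (xs k)),
      hshift fun k => Real.logb 2 (p (xs k))]
    simp only [Real.logb, ← Finset.sum_div]
    rw [Finset.sum_congr rfl hprob, Finset.sum_sub_distrib]
    ring
  have hlog2 : 0 < Real.log 2 := Real.log_pos one_lt_two
  have hcoef : ((N : ℝ) * (1 - (d : ℝ)⁻¹) + (t0 : ℝ) / d - 1) * Real.log n ≤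
      ((((N : ℝ) - 1) * d + (t0 : ℝ) - 1) / d) * Real.log n := by
    refine mul_le_mul_of_nonneg_right ?_ (Real.log_natCast_nonneg n)
    have hN1 : (1 : ℝ) ≤ N := by exact_mod_cast hN.le
    have hinv := mul_le_mul_of_nonneg_right hN1 (inv_pos.2 hdpos).le
    have heq : (((N : ℝ) - 1) * d + (t0 : ℝ) - 1) / d =
        (N : ℝ) - 1 + (t0 : ℝ) / d - (d : ℝ)⁻¹ := by
      field_simp
    rw [heq]
    linarith
  rw [Fintype.card_fin, Real.log_inv] at hred
  rw [hlen]
  simp only [Real.logb]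
  rw [Real.log_mul (by positivity) (Real.exp_pos _).ne', Real.log_exp, ← mul_div_assoc,
    ← mul_div_assoc, ← add_div, ← add_div]
  refine div_le_div_of_nonneg_right ?_ hlog2.le
  linarith
end

section
/- Let LP be the Laplace estimator on alphabet X = {1,…,N}, i.e., LP(x; x^k) = (|{1 ≤ i ≤ k : x_i = x}| + 1)/(k + N). Then for any sequence x^n over X and any probability distribution p on X, ℓ(x^n; LP) − ℓ(x^n; p) ≤ 2(N−1)·log₂ n + log₂(N·e^N). -/
open Finset

/-- Probability the Laplace estimator on alphabet `{1,…,N}` assigns to symbol `x` after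
the (0-indexed) prefix `xs 0, …, xs (k-1)`:
`LP(x; x^k) = (|{1 ≤ i ≤ k : x_i = x}| + 1)/(k + N)`. -/
noncomputable def laplaceProb (N : ℕ) (xs : ℕ → Fin N) (k : ℕ) (x : Fin N) : ℝ :=
  ((((Finset.range k).filter (fun i => xs i = x)).card : ℝ) + 1) / ((k : ℝ) + N)

/-- Number of occurrences of `x` among the first `k` symbols of `xs`. -/
def prefixCount {α : Type*} [DecidableEq α] (xs : ℕ → α) (k : ℕ) (x : α) : ℕ :=
  ((Finset.range k).filter (fun i => xs i = x)).card

lemma prefixCount_succ {α : Type*} [DecidableEq α] (xs : ℕ → α) (k : ℕ) (x : α) :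
    prefixCount xs (k + 1) x = prefixCount xs k x + if xs k = x then 1 else 0 := by
  unfold prefixCount
  rw [Finset.range_add_one, Finset.filter_insert]
  split_ifs <;> simp

lemma sum_prefixCount {α : Type*} [DecidableEq α] [Fintype α] (xs : ℕ → α) (n : ℕ) :
    ∑ x, prefixCount xs n x = n := by
  induction n with
  | zero => simp [prefixCount]
  | succ n ih => simp [prefixCount_succ, Finset.sum_add_distrib, ih]

lemma prod_comp_eq_prod_pow_prefixCount {α R : Type*} [DecidableEq α] [Fintype α]
    [CommMonoid R] (xs : ℕ → α) (p : α → R) (n : ℕ) :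
    ∏ i ∈ Finset.range n, p (xs i) = ∏ x, p x ^ prefixCount xs n x := by
  induction n with
  | zero => simp [prefixCount]
  | succ n ih =>
    simp only [prefixCount_succ, Finset.prod_range_succ, pow_add, Finset.prod_mul_distrib, ih]
    simp

lemma prod_factorial_prefixCount_succ {α : Type*} [DecidableEq α] [Fintype α]
    (xs : ℕ → α) (n : ℕ) :
    ∏ x, (prefixCount xs (n + 1) x).factorial =
      (∏ x, (prefixCount xs n x).factorial) * (prefixCount xs n (xs n) + 1) := by
  have h (x : α) : (prefixCount xs (n + 1) x).factorial =
      (prefixCount xs n x).factorial * if xs n = x then prefixCount xs n x + 1 else 1 := by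
    rw [prefixCount_succ]
    split_ifs
    · rw [Nat.factorial_succ, mul_comm]
    · simp
  simp only [h, Finset.prod_mul_distrib]
  simp

lemma laplaceProb_pos {N : ℕ} (hN : 0 < N) (xs : ℕ → Fin N) (k : ℕ) (x : Fin N) :
    0 < laplaceProb N xs k x := by
  unfold laplaceProb
  positivity

lemma prod_laplaceProb_mul_ascFactorial {N : ℕ} (hN : 0 < N) (xs : ℕ → Fin N) (n : ℕ) :
    (∏ i ∈ Finset.range n, laplaceProb N xs i (xs i)) * (N.ascFactorial n : ℝ) =
      ((∏ x, (prefixCount xs n x).factorial : ℕ) : ℝ) := by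
  induction n with
  | zero => simp [prefixCount]
  | succ n ih =>
    rw [prod_factorial_prefixCount_succ, Finset.prod_range_succ, Nat.ascFactorial_succ]
    push_cast at ih ⊢
    rw [← ih]
    have hpos : ((n : ℝ) + N) ≠ 0 := by positivity
    unfold laplaceProb prefixCount
    field_simp
    ring

lemma multinomial_mul_prod_pow_le_one {α : Type*} [DecidableEq α] [Fintype α] (p : α → ℝ)
    (hp0 : ∀ x, 0 ≤ p x) (hp1 : ∑ x, p x = 1) (c : α → ℕ) :
    (Nat.multinomial Finset.univ c : ℝ) * ∏ x, p x ^ c x ≤ 1 := by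
  have h := Finset.sum_pow_eq_sum_piAntidiag Finset.univ p (∑ x, c x)
  rw [hp1, one_pow] at h
  rw [h]
  refine Finset.single_le_sum
    (f := fun k : α → ℕ => (Nat.multinomial Finset.univ k : ℝ) * ∏ x, p x ^ k x)
    (fun k _ => mul_nonneg (Nat.cast_nonneg _)
      (Finset.prod_nonneg fun x _ => pow_nonneg (hp0 x) _)) ?_
  simp

/-- The likelihood ratio against the Laplace estimator is at most the number of types. -/
lemma prod_le_choose_mul_prod_laplaceProb {M : ℕ} (xs : ℕ → Fin (M + 1))
    (p : Fin (M + 1) → ℝ) (hp0 : ∀ x, 0 ≤ p x) (hp1 : ∑ x, p x = 1) (n : ℕ) :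
    ∏ i ∈ Finset.range n, p (xs i) ≤
      ((n + M).choose M : ℝ) * ∏ i ∈ Finset.range n, laplaceProb (M + 1) xs i (xs i) := by
  have hlap := prod_laplaceProb_mul_ascFactorial (Nat.add_one_pos M) xs n
  have hmult := multinomial_mul_prod_pow_le_one p hp0 hp1 (prefixCount xs n)
  have hspec := Nat.multinomial_spec Finset.univ (prefixCount xs n)
  rw [sum_prefixCount] at hspec
  rw [← prod_comp_eq_prod_pow_prefixCount] at hmult
  rw [Nat.ascFactorial_eq_factorial_mul_choose, add_comm M n,
    Nat.choose_symm_add] at hlap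
  have hspec' : ((∏ x, (prefixCount xs n x).factorial : ℕ) : ℝ) *
      (Nat.multinomial Finset.univ (prefixCount xs n) : ℝ) = (n.factorial : ℝ) := by
    exact_mod_cast hspec
  have hfac : (0 : ℝ) < n.factorial := by exact_mod_cast n.factorial_pos
  set F : ℝ := ((∏ x, (prefixCount xs n x).factorial : ℕ) : ℝ)
  have hF : 0 ≤ F := Nat.cast_nonneg _
  refine le_of_mul_le_mul_left ?_ hfac
  calc (n.factorial : ℝ) * ∏ i ∈ Finset.range n, p (xs i)
      = F * ((Nat.multinomial Finset.univ (prefixCount xs n) : ℝ) *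
          ∏ i ∈ Finset.range n, p (xs i)) := by rw [← hspec', mul_assoc]
    _ ≤ F * 1 := mul_le_mul_of_nonneg_left hmult hF
    _ = _ := by
      rw [mul_one, ← hlap]
      push_cast
      ring

lemma choose_add_le_pow (n k : ℕ) : (n + k).choose k ≤ (n + 1) ^ k := by
  induction k with
  | zero => simp
  | succ k ih =>
    refine Nat.le_of_mul_le_mul_right ?_ k.succ_pos
    calc (n + (k + 1)).choose (k + 1) * (k + 1)
        = (n + k + 1) * (n + k).choose k := (Nat.add_one_mul_choose_eq (n + k) k).symm
      _ ≤ ((n + 1) * (k + 1)) * (n + 1) ^ k := Nat.mul_le_mul (by nlinarith) ih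
      _ = (n + 1) ^ (k + 1) * (k + 1) := by ring

lemma choose_add_le_pow_mul_exp {n : ℕ} (hn : 1 ≤ n) (M : ℕ) :
    ((n + M).choose M : ℝ) ≤
      (n : ℝ) ^ (2 * M) * (((M + 1 : ℕ) : ℝ) * Real.exp ((M + 1 : ℕ) : ℝ)) := by
  have hn' : (1 : ℝ) ≤ n := by exact_mod_cast hn
  have hchoose : ((n + M).choose M : ℝ) ≤ ((n : ℝ) + 1) ^ M := by
    exact_mod_cast choose_add_le_pow n M
  have hexp : (2 : ℝ) ^ M ≤ Real.exp ((M + 1 : ℕ) : ℝ) := by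
    have h2 : (2 : ℝ) ≤ Real.exp 1 := by linarith [Real.add_one_le_exp (1 : ℝ)]
    calc (2 : ℝ) ^ M ≤ Real.exp 1 ^ M := pow_le_pow_left₀ (by norm_num) h2 M
      _ = Real.exp (M : ℝ) := by rw [← Real.exp_nat_mul, mul_one]
      _ ≤ _ := Real.exp_le_exp.2 (by push_cast; linarith)
  have hM : (1 : ℝ) ≤ ((M + 1 : ℕ) : ℝ) := by
    push_cast
    linarith [Nat.cast_nonneg (α := ℝ) M]
  calc ((n + M).choose M : ℝ) ≤ ((n : ℝ) + 1) ^ M := hchoose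
    _ ≤ ((n : ℝ) * 2) ^ M := pow_le_pow_left₀ (by positivity) (by linarith) M
    _ = (n : ℝ) ^ M * 2 ^ M := mul_pow _ _ _
    _ ≤ (n : ℝ) ^ (2 * M) * Real.exp ((M + 1 : ℕ) : ℝ) :=
      mul_le_mul (pow_le_pow_right₀ hn' (by omega)) hexp (by positivity) (by positivity)
    _ ≤ _ := mul_le_mul_of_nonneg_left
      (le_mul_of_one_le_left (Real.exp_pos _).le hM) (by positivity)

lemma sum_Icc_one_pred {A : Type*} [AddCommMonoid A] (f : ℕ → A) (n : ℕ) :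
    ∑ k ∈ Finset.Icc 1 n, f (k - 1) = ∑ i ∈ Finset.range n, f i := by
  induction n with
  | zero => simp
  | succ n ih => rw [Finset.sum_Icc_succ_top (by omega), ih, Finset.sum_range_succ]; simp

/-- for the Laplace estimator `LP` on `X = {1,…,N}`, any sequence `x^n`
over `X` and any probability distribution `p` on `X`,
`ℓ(x^n; LP) - ℓ(x^n; p) ≤ 2(N-1)·log₂ n + log₂(N·e^N)`.
If `p` assigns probability `0` to some occurring letter, then `ℓ(x^n; p) = +∞` and the
claim holds trivially (first disjunct). -/
theorem stmt11 (N : ℕ) (hN : 1 < N) (n : ℕ) (hn : 1 ≤ n) (xs : ℕ → Fin N)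
    (p : Fin N → ℝ) (hp0 : ∀ x, 0 ≤ p x) (hp1 : ∑ x, p x = 1) :
    (∃ k ∈ Finset.Icc 1 n, p (xs (k - 1)) = 0) ∨
      (-∑ k ∈ Finset.Icc 1 n, Real.logb 2 (laplaceProb N xs (k - 1) (xs (k - 1))))
        - (-∑ k ∈ Finset.Icc 1 n, Real.logb 2 (p (xs (k - 1))))
      ≤ 2 * ((N : ℝ) - 1) * Real.logb 2 n + Real.logb 2 ((N : ℝ) * Real.exp N) := by
  by_cases hzero : ∃ k ∈ Finset.Icc 1 n, p (xs (k - 1)) = 0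
  · exact Or.inl hzero
  right
  push Not at hzero
  have hne : ∀ i ∈ Finset.range n, p (xs i) ≠ 0 := fun i hi =>
    hzero (i + 1) (Finset.mem_Icc.2 ⟨by omega, Finset.mem_range.1 hi⟩)
  obtain ⟨M, rfl⟩ : ∃ M, N = M + 1 := ⟨N - 1, by omega⟩
  have hlap : ∀ i ∈ Finset.range n, laplaceProb (M + 1) xs i (xs i) ≠ 0 := fun i _ =>
    (laplaceProb_pos M.succ_pos xs i _).ne'
  rw [sum_Icc_one_pred (fun i => Real.logb 2 (laplaceProb (M + 1) xs i (xs i))),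
    sum_Icc_one_pred (fun i => Real.logb 2 (p (xs i))),
    ← Real.logb_prod _ _ hlap, ← Real.logb_prod _ _ hne]
  have hL : 0 < ∏ i ∈ Finset.range n, laplaceProb (M + 1) xs i (xs i) :=
    Finset.prod_pos fun i _ => laplaceProb_pos M.succ_pos xs i _
  have hP : 0 < ∏ i ∈ Finset.range n, p (xs i) :=
    Finset.prod_pos fun i hi => (hp0 _).lt_of_ne' (hne i hi)
  have hn' : (0 : ℝ) < n := by exact_mod_cast hn
  have hB : (0 : ℝ) < ((M + 1 : ℕ) : ℝ) * Real.exp ((M + 1 : ℕ) : ℝ) := by positivity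
  have hle := (prod_le_choose_mul_prod_laplaceProb xs p hp0 hp1 n).trans
    (mul_le_mul_of_nonneg_right (choose_add_le_pow_mul_exp hn M) hL.le)
  have hlog := Real.logb_le_logb_of_le (b := 2) (by norm_num) hP hle
  rw [Real.logb_mul (by positivity) hL.ne', Real.logb_mul (by positivity) hB.ne',
    Real.logb_pow] at hlog
  push_cast at hlog ⊢
  rw [add_sub_cancel_right]
  linarith
end
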